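/- The space X = (ℓ₁, ‖·‖_X) is smooth: for every nonzero x ∈ X there is exactly one continuous linear functional F on X with ‖F‖ = 1 (operator norm with respect to ‖·‖_X) and F(x) = ‖x‖_X. -/

import Mathlib

/-!
Write `N = XNf p` and `ϑ_k = vth p k`.  All `ϑ_k` are seminorms, `ϑ_k ≤ ϑ_{k+1}`, and
`ϑ_k(y) ≤ ‖y‖₁`, so `N` is a seminorm dominated by the `ℓ₁` norm, and Hahn–Banach provides a
norming functional at `x`.

Uniqueness rests on two observations.

* If `ϑ_k(x) ≠ 0`, then `ϑ_k` has a Gateaux derivative `L_k` at `x`, because every exponent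
  exceeds `1` (`vth_deriv`).
* For `y` supported on the first `k` coordinates, passing from `ϑ_k` to `N` is nonexpansive and
  non-decreasing, so `N(x + ty) - N(x) ≤ max 0 (ϑ_k(x + ty) - ϑ_k(x))` (`XNf_add_le_max`).
  Hence a norming functional `F` vanishes on those `y` with `L_k y = 0`.

So on vectors supported on the first `k` coordinates `F` is a multiple of `L_k`. If `G` is another
norming functional and `P_k` truncates to the first `k` coordinates, then
`F(P_k y) G(P_k x) = G(P_k y) F(P_k x)`. Letting `k → ∞` gives `F(y) N(x) = G(y) N(x)`, and
`N(x) ≠ 0`.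
-/

open Filter Topology

/-- The recursively defined functionals `ϑ_n` (0-based indexing: the exponent
`p k` here is the paper's `p_{k+1}`, and the coordinate `x k` is the paper's
`x_{k+1}`): `ϑ_0(x) = 0` and
`ϑ_{n+1}(x) = (ϑ_n(x)^{p n} + |x n|^{p n})^{1/(p n)}`; `ϑ_n` depends only on the
first `n` coordinates of `x`. -/
noncomputable def vth (p : ℕ → ℝ) : ℕ → (ℕ → ℝ) → ℝ
  | 0, _ => 0
  | n + 1, x => (vth p n x ^ p n + |x n| ^ p n) ^ (1 / p n)

/-- The limit norm `‖x‖_X = lim_n ϑ_n(x)` (the sequence `ϑ_n(x)` is non-decreasing,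
so the limit equals the supremum). -/
noncomputable def XNf (p : ℕ → ℝ) (x : ℕ → ℝ) : ℝ := ⨆ n, vth p n x

/-! ### The seminorms `ϑ_n` -/

lemma pnorm_nonneg {q a b : ℝ} (ha : 0 ≤ a) (hb : 0 ≤ b) :
    0 ≤ (a ^ q + b ^ q) ^ (1 / q) := by positivity

lemma pnorm_mono {q a b a' b' : ℝ} (hq : 1 < q) (ha : 0 ≤ a) (hb : 0 ≤ b) (haa : a ≤ a')
    (hbb : b ≤ b') : (a ^ q + b ^ q) ^ (1 / q) ≤ (a' ^ q + b' ^ q) ^ (1 / q) := by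
  have hq0 : 0 ≤ q := by linarith
  gcongr

/-- Minkowski's inequality in the plane. -/
lemma pnorm_add_le {q a b c d : ℝ} (hq : 1 < q) (ha : 0 ≤ a) (hb : 0 ≤ b) (hc : 0 ≤ c)
    (hd : 0 ≤ d) : ((a + c) ^ q + (b + d) ^ q) ^ (1 / q) ≤
      (a ^ q + b ^ q) ^ (1 / q) + (c ^ q + d ^ q) ^ (1 / q) := by
  have h := Real.Lp_add_le_of_nonneg (s := (Finset.univ : Finset (Fin 2)))
    (f := ![a, b]) (g := ![c, d]) (p := q) hq.le
    (by intro i _; fin_cases i <;> simpa) (by intro i _; fin_cases i <;> simpa)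
  simpa [Fin.sum_univ_two] using h

lemma pnorm_zero_right {q a : ℝ} (hq : 1 < q) (ha : 0 ≤ a) :
    (a ^ q + 0 ^ q) ^ (1 / q) = a := by
  rw [Real.zero_rpow (by linarith), add_zero, one_div, Real.rpow_rpow_inv ha (by linarith)]

lemma pnorm_mul {q a b c : ℝ} (hq : 1 < q) (ha : 0 ≤ a) (hb : 0 ≤ b) (hc : 0 ≤ c) :
    ((c * a) ^ q + (c * b) ^ q) ^ (1 / q) = c * (a ^ q + b ^ q) ^ (1 / q) := by
  rw [Real.mul_rpow hc ha, Real.mul_rpow hc hb, ← mul_add,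
    Real.mul_rpow (by positivity) (by positivity), one_div, Real.rpow_rpow_inv hc (by linarith)]

section
variable {p : ℕ → ℝ}

lemma vth_nonneg (n : ℕ) (x : ℕ → ℝ) : 0 ≤ vth p n x := by
  induction n with
  | zero => simp [vth]
  | succ n ih => exact pnorm_nonneg ih (abs_nonneg _)

lemma vth_le_succ (hp : ∀ n, 1 < p n) (n : ℕ) (x : ℕ → ℝ) : vth p n x ≤ vth p (n + 1) x := by
  have h := pnorm_mono (hp n) (vth_nonneg (p := p) n x) le_rfl le_rfl (abs_nonneg (x n))
  rwa [pnorm_zero_right (hp n) (vth_nonneg n x)] at h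

lemma vth_mono (hp : ∀ n, 1 < p n) (x : ℕ → ℝ) : Monotone fun n => vth p n x :=
  monotone_nat_of_le_succ fun n => vth_le_succ hp n x

lemma abs_le_vth_succ (hp : ∀ n, 1 < p n) (n : ℕ) (x : ℕ → ℝ) : |x n| ≤ vth p (n + 1) x := by
  have h := pnorm_mono (hp n) le_rfl (abs_nonneg (x n)) (vth_nonneg (p := p) n x) le_rfl
  rwa [add_comm, pnorm_zero_right (hp n) (abs_nonneg _)] at h

lemma vth_le_sum (hp : ∀ n, 1 < p n) (n : ℕ) (x : ℕ → ℝ) :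
    vth p n x ≤ ∑ i ∈ Finset.range n, |x i| := by
  induction n with
  | zero => simp [vth]
  | succ n ih =>
    rw [Finset.sum_range_succ]
    refine (Real.rpow_add_rpow_le_add (vth_nonneg n x) (abs_nonneg _) (hp n).le).trans ?_
    gcongr

lemma vth_add_le (hp : ∀ n, 1 < p n) (n : ℕ) (x y : ℕ → ℝ) :
    vth p n (x + y) ≤ vth p n x + vth p n y := by
  induction n with
  | zero => simp [vth]
  | succ n ih =>
    refine (pnorm_mono (hp n) (vth_nonneg n _) (abs_nonneg _) ih (abs_add_le (x n) (y n))).trans ?_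
    exact pnorm_add_le (hp n) (vth_nonneg n x) (abs_nonneg _) (vth_nonneg n y) (abs_nonneg _)

lemma vth_smul (hp : ∀ n, 1 < p n) (n : ℕ) (c : ℝ) (x : ℕ → ℝ) :
    vth p n (c • x) = |c| * vth p n x := by
  induction n with
  | zero => simp [vth]
  | succ n ih =>
    simp only [vth, ih, Pi.smul_apply, smul_eq_mul, abs_mul]
    exact pnorm_mul (hp n) (vth_nonneg n x) (abs_nonneg _) (abs_nonneg _)

lemma vth_congr (n : ℕ) (x y : ℕ → ℝ) (h : ∀ i < n, x i = y i) : vth p n x = vth p n y := by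
  induction n with
  | zero => rfl
  | succ n ih =>
    simp only [vth, ih fun i hi => h i (by omega), h n (by omega)]

lemma vth_eq_zero (hp : ∀ n, 1 < p n) {n : ℕ} {x : ℕ → ℝ} (h : vth p n x = 0) :
    ∀ i < n, x i = 0 := by
  intro i hi
  have h1 := abs_le_vth_succ hp i x
  have h2 : vth p (i + 1) x ≤ vth p n x := vth_mono hp x hi
  exact abs_eq_zero.1 (le_antisymm (by linarith) (abs_nonneg _))

/-- Past index `k`, changing only coordinates below `k` acts on `ϑ_m` through a non-decreasing
nonexpansive function of `ϑ_k`. -/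
lemma vth_le_max (hp : ∀ n, 1 < p n) {k : ℕ} {x y : ℕ → ℝ} (hxy : ∀ i, k ≤ i → y i = x i)
    {m : ℕ} (hm : k ≤ m) :
    vth p m y ≤ vth p m x + max 0 (vth p k y - vth p k x) := by
  induction m, hm using Nat.le_induction with
  | base =>
    have := le_max_right 0 (vth p k y - vth p k x)
    linarith
  | succ m hm ih =>
    set d := max 0 (vth p k y - vth p k x) with hd
    have hd0 : 0 ≤ d := le_max_left _ _
    have h1 := pnorm_mono (hp m) (vth_nonneg m y) (abs_nonneg (y m)) ih le_rfl
    have h2 := pnorm_add_le (hp m) (vth_nonneg (p := p) m x) (abs_nonneg (y m)) hd0 le_rfl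
    rw [pnorm_zero_right (hp m) hd0, add_zero] at h2
    rw [hxy m hm] at h1 h2
    simp only [vth]
    rw [hxy m hm]
    exact h1.trans h2

/-- Gateaux differentiability of `ϑ_n` away from its zeros. -/
lemma vth_deriv (hp : ∀ n, 1 < p n) (x : ℕ → ℝ) (n : ℕ) (hn : vth p n x ≠ 0) :
    ∃ L : (ℕ → ℝ) →ₗ[ℝ] ℝ, ∀ z, HasDerivAt (fun t : ℝ => vth p n (x + t • z)) (L z) 0 := by
  induction n with
  | zero => simp [vth] at hn
  | succ n ih =>
    -- It is enough to differentiate the `p n`-th power of `ϑ_n`, even where `ϑ_n` vanishes.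
    have key : ∃ L : (ℕ → ℝ) →ₗ[ℝ] ℝ,
        ∀ z, HasDerivAt (fun t : ℝ => vth p n (x + t • z) ^ p n) (L z) 0 := by
      by_cases h0 : vth p n x = 0
      · refine ⟨0, fun z => ?_⟩
        -- Here `x` vanishes below `n`, so `ϑ_n(x + tz) = |t| ϑ_n(z)`.
        have h : ∀ t : ℝ, vth p n (x + t • z) ^ p n = |t| ^ p n * vth p n z ^ p n := by
          intro t
          rw [vth_congr n (x + t • z) (t • z)
            (fun i hi => by simp [vth_eq_zero hp h0 i hi]), vth_smul hp,
            Real.mul_rpow (abs_nonneg _) (vth_nonneg n z)]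
        simp only [h]
        simpa using (hasDerivAt_abs_rpow 0 (hp n)).mul_const (vth p n z ^ p n)
      · obtain ⟨L, hL⟩ := ih h0
        refine ⟨(p n * vth p n x ^ (p n - 1)) • L, fun z => ?_⟩
        convert! (hL z).rpow_const (p := p n) (Or.inr (hp n).le) using 1
        simp
        ring
    obtain ⟨L, hL⟩ := key
    refine ⟨(1 / p n * (vth p n x ^ p n + |x n| ^ p n) ^ (1 / p n - 1)) •
      (L + (p n * |x n| ^ (p n - 2) * x n) • LinearMap.proj n), fun z => ?_⟩
    have h1 : HasDerivAt (fun t : ℝ => x n + t * z n) (z n) 0 := by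
      simpa using ((hasDerivAt_id (0 : ℝ)).mul_const (z n)).const_add (x n)
    have h2 : HasDerivAt (fun t : ℝ => |x n + t * z n| ^ p n)
        (p n * |x n| ^ (p n - 2) * x n * z n) 0 := by
      have h := hasDerivAt_abs_rpow (x n + 0 * z n) (hp n)
      convert! h.comp (0 : ℝ) h1 using 1
      simp
    have hne : vth p n x ^ p n + |x n| ^ p n ≠ 0 := by
      intro h
      apply hn
      have hpn := hp n
      simp only [vth, h]
      exact Real.zero_rpow (by positivity)
    have h3 := ((hL z).add h2).rpow_const (p := 1 / p n) (Or.inl (by simpa using hne))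
    convert! h3 using 1
    simp
    ring

/-! ### The limit norm on `ℓ₁` -/

lemma vth_le_norm (hp : ∀ n, 1 < p n) (n : ℕ) (x : lp (fun _ : ℕ => ℝ) 1) :
    vth p n x ≤ ‖x‖ := by
  refine (vth_le_sum hp n x).trans ?_
  simpa using lp.sum_rpow_le_norm_rpow (p := 1) (by simp) x (Finset.range n)

lemma vth_bdd (hp : ∀ n, 1 < p n) (x : lp (fun _ : ℕ => ℝ) 1) :
    BddAbove (Set.range fun n => vth p n x) :=
  ⟨‖x‖, by rintro _ ⟨n, rfl⟩; exact vth_le_norm hp n x⟩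

lemma vth_le_XNf (hp : ∀ n, 1 < p n) (n : ℕ) (x : lp (fun _ : ℕ => ℝ) 1) :
    vth p n x ≤ XNf p x := le_ciSup (vth_bdd hp x) n

lemma XNf_le_norm (hp : ∀ n, 1 < p n) (x : lp (fun _ : ℕ => ℝ) 1) : XNf p x ≤ ‖x‖ :=
  ciSup_le fun n => vth_le_norm hp n x

lemma XNf_nonneg (x : ℕ → ℝ) : 0 ≤ XNf p x := Real.iSup_nonneg fun n => vth_nonneg n x

lemma XNf_smul (hp : ∀ n, 1 < p n) (c : ℝ) (x : ℕ → ℝ) : XNf p (c • x) = |c| * XNf p x := by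
  simp only [XNf, vth_smul hp]
  exact (Real.mul_iSup_of_nonneg (abs_nonneg c) _).symm

lemma XNf_add_le (hp : ∀ n, 1 < p n) (x y : lp (fun _ : ℕ => ℝ) 1) :
    XNf p (x + y : lp (fun _ : ℕ => ℝ) 1) ≤ XNf p x + XNf p y :=
  ciSup_le fun n => (vth_add_le hp n x y).trans
    (add_le_add (vth_le_XNf hp n x) (vth_le_XNf hp n y))

lemma exists_vth_ne_zero (hp : ∀ n, 1 < p n) {x : lp (fun _ : ℕ => ℝ) 1} (hx : x ≠ 0) :
    ∃ n, vth p n x ≠ 0 := by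
  by_contra! h
  exact hx (lp.ext (funext fun i => vth_eq_zero hp (h (i + 1)) i (by omega)))

lemma XNf_add_le_max (hp : ∀ n, 1 < p n) {k : ℕ} {x y : lp (fun _ : ℕ => ℝ) 1}
    (hxy : ∀ i, k ≤ i → y i = x i) :
    XNf p y ≤ XNf p x + max 0 (vth p k y - vth p k x) := by
  refine ciSup_le fun m => ?_
  calc vth p m y ≤ vth p (max k m) y := vth_mono hp y (le_max_right _ _)
    _ ≤ vth p (max k m) x + max 0 (vth p k y - vth p k x) :=
      vth_le_max hp hxy (le_max_left _ _)
    _ ≤ _ := by gcongr; exact vth_le_XNf hp _ x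

/-! ### Norming functionals -/

lemma exists_norming (hp : ∀ n, 1 < p n) {x : lp (fun _ : ℕ => ℝ) 1} (hx : x ≠ 0) :
    ∃ F : lp (fun _ : ℕ => ℝ) 1 →L[ℝ] ℝ,
      (∀ y : lp (fun _ : ℕ => ℝ) 1, |F y| ≤ XNf p ↑y) ∧ F x = XNf p ↑x := by
  obtain ⟨g, hg, hgN⟩ := exists_extension_of_le_sublinear
    (LinearPMap.mkSpanSingleton x (XNf p x) hx) (fun y => XNf p y)
    (fun c hc y => by
      have := XNf_smul hp c y
      rwa [abs_of_pos hc] at this)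
    (fun y z => XNf_add_le hp y z)
    (by
      rintro ⟨y, hy⟩
      obtain ⟨c, rfl⟩ := Submodule.mem_span_singleton.1 hy
      have h1 : LinearPMap.mkSpanSingleton x (XNf p x) hx ⟨c • x, hy⟩ = c * XNf p x :=
        LinearPMap.mkSpanSingleton'_apply _ _ _ c hy
      have h2 : XNf p ↑(c • x) = |c| * XNf p x := XNf_smul hp c x
      refine h1.trans_le (le_of_le_of_eq ?_ h2.symm)
      exact mul_le_mul_of_nonneg_right (le_abs_self c) (XNf_nonneg _))
  have habs : ∀ y, |g y| ≤ XNf p y := by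
    intro y
    refine abs_le'.2 ⟨hgN y, ?_⟩
    have h := hgN (-y)
    have h' : XNf p ↑(-y) = XNf p y := by
      have h1 : ((-y : lp (fun _ : ℕ => ℝ) 1) : ℕ → ℝ) = (-1 : ℝ) • (y : ℕ → ℝ) :=
        (neg_one_smul ℝ (y : ℕ → ℝ)).symm
      rw [h1, XNf_smul hp, abs_neg, abs_one, one_mul]
    rwa [map_neg, h'] at h
  refine ⟨g.mkContinuous 1 fun y => ?_, habs, ?_⟩
  · rw [one_mul]
    exact (habs y).trans (XNf_le_norm hp y)
  · exact (hg ⟨x, Submodule.mem_span_singleton_self x⟩).trans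
      (LinearPMap.mkSpanSingleton_apply ℝ _ hx (XNf p x))

lemma norming_le_zero (hp : ∀ n, 1 < p n) {x z : lp (fun _ : ℕ => ℝ) 1} {k : ℕ}
    (hz : ∀ i, k ≤ i → z i = 0)
    (hd : HasDerivAt (fun t : ℝ => vth p k ((x : ℕ → ℝ) + t • (z : ℕ → ℝ))) 0 0)
    (F : lp (fun _ : ℕ => ℝ) 1 →L[ℝ] ℝ)
    (hF : ∀ y : lp (fun _ : ℕ => ℝ) 1, |F y| ≤ XNf p ↑y) (hFx : F x = XNf p ↑x) :
    F z ≤ 0 := by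
  by_contra! hpos
  have ho := (hasDerivAt_iff_isLittleO.1 hd).def (half_pos hpos)
  have hev : ∀ᶠ t : ℝ in 𝓝[>] 0, _ := ho.filter_mono nhdsWithin_le_nhds
  obtain ⟨t, ht, htpos⟩ := (hev.and self_mem_nhdsWithin).exists
  have htpos : 0 < t := htpos
  simp only [smul_zero, sub_zero, zero_smul, add_zero, Real.norm_eq_abs, abs_of_pos htpos] at ht
  have h1 : F x + t * F z ≤ XNf p ↑(x + t • z) := by
    have := (le_abs_self _).trans (hF (x + t • z))
    simpa using this
  have h2 : XNf p ↑(x + t • z) ≤ XNf p x + max 0 (vth p k ↑(x + t • z) - vth p k x) :=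
    XNf_add_le_max hp fun i hi => by
      change x i + t * z i = x i
      rw [hz i hi, mul_zero, add_zero]
  have h3 : max 0 (vth p k ↑(x + t • z) - vth p k x) ≤ F z / 2 * t :=
    max_le (by positivity) ((le_abs_self _).trans ht)
  have h4 : 0 < t * F z := mul_pos htpos hpos
  linarith

/-- Truncation of an element of `ℓ₁` to its first `k` coordinates. -/
noncomputable def trunc (k : ℕ) (y : lp (fun _ : ℕ => ℝ) 1) : lp (fun _ : ℕ => ℝ) 1 :=
  ∑ i ∈ Finset.range k, lp.single 1 i (y i)

lemma trunc_apply (k : ℕ) (y : lp (fun _ : ℕ => ℝ) 1) (i : ℕ) :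
    trunc k y i = if i < k then y i else 0 := by
  induction k with
  | zero => simp [trunc]
  | succ k ih =>
    have h : trunc (k + 1) y i = trunc k y i + lp.single (E := fun _ : ℕ => ℝ) 1 k (y k) i := by
      rw [trunc, Finset.sum_range_succ]
      rfl
    rw [h, ih, lp.single_apply, Pi.single_apply]
    grind

lemma tendsto_trunc (F : lp (fun _ : ℕ => ℝ) 1 →L[ℝ] ℝ) (y : lp (fun _ : ℕ => ℝ) 1) :
    Tendsto (fun k => F (trunc k y)) atTop (𝓝 (F y)) :=
  (F.continuous.tendsto y).comp
    (lp.hasSum_single (E := fun _ : ℕ => ℝ) (p := 1) (by simp) y).tendsto_sum_nat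

/-- On the first `k` coordinates every norming functional is proportional to the derivative `L`
of `ϑ_k` at `x`; the factor is determined by evaluating at the truncation of `x`, where
`L` takes the value `ϑ_k(x)`. -/
lemma norming_proportional (hp : ∀ n, 1 < p n) {x : lp (fun _ : ℕ => ℝ) 1} {k : ℕ}
    {L : (ℕ → ℝ) →ₗ[ℝ] ℝ}
    (hL : ∀ z, HasDerivAt (fun t : ℝ => vth p k ((x : ℕ → ℝ) + t • z)) (L z) 0)
    (F : lp (fun _ : ℕ => ℝ) 1 →L[ℝ] ℝ)
    (hF : ∀ y : lp (fun _ : ℕ => ℝ) 1, |F y| ≤ XNf p ↑y) (hFx : F x = XNf p ↑x)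
    (y : lp (fun _ : ℕ => ℝ) 1) :
    vth p k x * F (trunc k y) = L (trunc k y) * F (trunc k x) := by
  have hLx : L (trunc k x) = vth p k x := by
    have h : (fun t : ℝ => vth p k ((x : ℕ → ℝ) + t • (trunc k x : ℕ → ℝ))) =ᶠ[𝓝 0]
        fun t => (1 + t) * vth p k x := by
      filter_upwards [lt_mem_nhds (show (-1 : ℝ) < 0 by norm_num)] with t ht
      rw [vth_congr k _ ((1 + t) • (x : ℕ → ℝ))
        (fun i hi => by simp [trunc_apply, hi]; ring), vth_smul hp, abs_of_pos (by linarith)]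
    have h' : HasDerivAt (fun t : ℝ => (1 + t) * vth p k x) (vth p k x) 0 := by
      simpa using ((hasDerivAt_id (0 : ℝ)).const_add 1).mul_const (vth p k x)
    exact (hL _).unique (h'.congr_of_eventuallyEq h)
  have main : ∀ z : lp (fun _ : ℕ => ℝ) 1, (∀ i, k ≤ i → z i = 0) → L z = 0 → F z ≤ 0 :=
    fun z hz hLz => norming_le_zero hp hz (hLz ▸ hL z) F hF hFx
  set z := vth p k x • trunc k y - L (trunc k y) • trunc k x with hz
  have hzs : ∀ i, k ≤ i → z i = 0 := by
    intro i hi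
    change vth p k x * trunc k y i - L (trunc k y) * trunc k x i = 0
    simp [trunc_apply, not_lt.2 hi]
  have hLz : L z = 0 := by
    have : (z : ℕ → ℝ) = vth p k x • (trunc k y : ℕ → ℝ)
      - L (trunc k y) • (trunc k x : ℕ → ℝ) := rfl
    rw [this, map_sub, map_smul, map_smul, hLx, smul_eq_mul, smul_eq_mul]
    ring
  have h1 := main z hzs hLz
  have h2 : F (-z) ≤ 0 := by
    refine main (-z) (fun i hi => by simp [hzs i hi]) ?_
    have : ((-z : lp (fun _ : ℕ => ℝ) 1) : ℕ → ℝ) = -(z : ℕ → ℝ) := rfl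
    rw [this, map_neg, hLz, neg_zero]
  rw [map_neg] at h2
  have h3 : F z = vth p k x * F (trunc k y) - L (trunc k y) * F (trunc k x) := by
    simp [hz]
  linarith

end

/-- **Lemma 6.** The space `X = (ℓ₁, ‖·‖_X)` is smooth: every nonzero
`x` has exactly one norming functional, i.e. exactly one continuous linear functional
`F` with `‖F‖_X ≤ 1` (equivalently `|F y| ≤ ‖y‖_X` for all `y`; together with the
attainment below this forces `‖F‖_X = 1`) and `F x = ‖x‖_X`.  (Since `‖·‖_X` is
equivalent to `‖·‖₁`, the continuous functionals for the two norms coincide.) -/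
theorem X_is_smooth (p : ℕ → ℝ) (hp : ∀ n, 1 < p n) (hpa : Antitone p)
    (hsum : Summable (fun n => 1 - 1 / p n))
    (x : lp (fun _ : ℕ => ℝ) 1) (hx : x ≠ 0) :
    ∃! F : lp (fun _ : ℕ => ℝ) 1 →L[ℝ] ℝ,
      (∀ y : lp (fun _ : ℕ => ℝ) 1, |F y| ≤ XNf p ↑y) ∧ F x = XNf p ↑x := by
  obtain ⟨n₀, hn₀⟩ := exists_vth_ne_zero hp hx
  have hpos : ∀ k, n₀ ≤ k → 0 < vth p k x := fun k hk =>
    ((vth_nonneg n₀ _).lt_of_ne' hn₀).trans_le (vth_mono hp x hk)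
  have hN : XNf p x ≠ 0 := ((hpos n₀ le_rfl).trans_le (vth_le_XNf hp n₀ x)).ne'
  refine existsUnique_of_exists_of_unique (exists_norming hp hx) ?_
  rintro F G ⟨hF, hFx⟩ ⟨hG, hGx⟩
  ext y
  have hev : (fun k => F (trunc k y) * G (trunc k x)) =ᶠ[atTop]
      fun k => G (trunc k y) * F (trunc k x) := by
    filter_upwards [eventually_ge_atTop n₀] with k hk
    have hk0 := (hpos k hk).ne'
    obtain ⟨L, hL⟩ := vth_deriv hp x k hk0
    have h1 := norming_proportional hp hL F hF hFx y
    have h2 := norming_proportional hp hL G hG hGx y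
    apply mul_left_cancel₀ hk0
    linear_combination G (trunc k x) * h1 - F (trunc k x) * h2
  have hlim := tendsto_nhds_unique_of_eventuallyEq
    ((tendsto_trunc F y).mul (tendsto_trunc G x)) ((tendsto_trunc G y).mul (tendsto_trunc F x)) hev
  rw [hFx, hGx] at hlim
  exact mul_right_cancel₀ hN hlim
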